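/- arXiv:2602.16903 — 5 statements merged into one kernel-verified Lean document; each statement's English description precedes it below -/
import Mathlib

section
/- Let ι and α be types, let M : ℕ → ι → α, and let a ≤ b be natural numbers. Assume there exist t₀ with a ≤ t₀ ≤ b and k₀ : ι such that: (i) for every s with a ≤ s ≤ b, if s < t₀ then M s = M a, and if t₀ ≤ s then M s = M t₀; and (ii) M t₀ k = M a k for every k ≠ k₀ (i.e., within [a,b] the array changes at most once, at time t₀, and only in entry k₀). Then every collect with read times in [a,b] is a snapshot over [a,b]: for every c : ι → ℕ with a ≤ c k ≤ b for all k, there exists t with a ≤ t ≤ b such that M (c k) k = M t k for all k. -/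
section SingleEntry

variable {T ι : Type*} {α : ι → Type*} {M : T → ∀ k, α k} {S : Set T}

theorem entry_eq_before_of_after_eq_before [LinearOrder T] {t₀ : T} {before after : ∀ k, α k}
    (hM : ∀ s ∈ S, (s < t₀ → M s = before) ∧ (t₀ ≤ s → M s = after))
    {k : ι} (hk : after k = before k) {s : T} (hs : s ∈ S) : M s k = before k := by
  obtain hlt | hge := lt_or_ge s t₀
  · rw [(hM s hs).1 hlt]
  · rw [(hM s hs).2 hge, hk]

theorem collect_is_snapshot_of_at_most_one_change_general {k₀ : ι} {r : ∀ k, α k}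
    (hr : ∀ s ∈ S, ∀ k, k ≠ k₀ → M s k = r k) {c : ι → T} (hc : ∀ k, c k ∈ S) :
    ∃ t ∈ S, ∀ k, M (c k) k = M t k := by
  -- Only entry `k₀` can vary, so the time at which the collect reads it serves for all entries.
  refine ⟨c k₀, hc k₀, fun k => ?_⟩
  obtain rfl | hne := eq_or_ne k k₀
  · rfl
  · calc
      M (c k) k = r k := hr (c k) (hc k) k hne
      _ = M (c k₀) k := (hr (c k₀) (hc k₀) k hne).symm

end SingleEntry

/-- If, within the interval `[a,b]`, the array `M` changes at most once
(at time `t₀`, and only in entry `k₀`), then every collect with read times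
in `[a,b]` is a snapshot over `[a,b]`. -/
theorem collect_is_snapshot_of_at_most_one_change
    {ι α : Type*} (M : ℕ → ι → α) (a b : ℕ) (hab : a ≤ b)
    (h : ∃ t₀, a ≤ t₀ ∧ t₀ ≤ b ∧ ∃ k₀ : ι,
      (∀ s, a ≤ s → s ≤ b → (s < t₀ → M s = M a) ∧ (t₀ ≤ s → M s = M t₀)) ∧
      (∀ k, k ≠ k₀ → M t₀ k = M a k)) :
    ∀ c : ι → ℕ, (∀ k, a ≤ c k ∧ c k ≤ b) →
      ∃ t, a ≤ t ∧ t ≤ b ∧ ∀ k, M (c k) k = M t k := by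
  obtain ⟨t₀, -, -, k₀, hM, hk⟩ := h
  have off_k₀ : ∀ s ∈ Set.Icc a b, ∀ k, k ≠ k₀ → M s k = M a k := fun _ hs k hne =>
    entry_eq_before_of_after_eq_before (fun s hs => hM s hs.1 hs.2) (hk k hne) hs
  simpa only [Set.mem_Icc, and_assoc] using
    fun c hc => collect_is_snapshot_of_at_most_one_change_general (c := c) off_k₀ hc
end

section
/- Let f : ℕ → ℕ be monotone and let P : ℕ → Prop satisfy the counter invariants (inv1) and (inv2). If a ≤ b and f b ≤ f a + 1, then there is at most one modification time in [a,b]: for all s, t with a ≤ s ≤ b, a ≤ t ≤ b, P s and P t, one has s = t. -/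
section OddInterval

variable {R : Type*} [Semiring R] [LinearOrder R] [IsStrictOrderedRing R] [SuccAddOrder R]

theorem add_two_le_of_odd_of_lt {m n : R} (hm : Odd m) (hn : Odd n) (hmn : m < n) :
    m + 2 ≤ n := by
  obtain ⟨i, rfl⟩ := hm
  obtain ⟨j, rfl⟩ := hn
  have hij : i < j := by simpa using hmn
  calc
    2 * i + 1 + 2 = 2 * (i + 1) + 1 := by rw [mul_add, mul_one, add_right_comm]
    _ ≤ 2 * j + 1 := by gcongr; exact Order.add_one_le_of_lt hij

theorem subsingleton_setOf_odd_mem_Icc_add_one (n : R) :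
    {k ∈ Set.Icc n (n + 1) | Odd k}.Subsingleton := by
  rintro k ⟨hkn, hk⟩ l ⟨hln, hl⟩
  wlog hkl : k ≤ l generalizing k l
  · exact (this hln hl hkn hk (le_of_not_ge hkl)).symm
  refine hkl.eq_of_not_lt fun hlt => ?_
  have add_two_le_add_one : n + 2 ≤ n + 1 :=
    calc
      n + 2 ≤ k + 2 := by gcongr; exact hkn.1
      _ ≤ l := add_two_le_of_odd_of_lt hk hl hlt
      _ ≤ n + 1 := hln.2
  exact one_lt_two.not_ge (le_of_add_le_add_left add_two_le_add_one)

theorem at_most_one_modification_general {T : Type*} [Preorder T] {f : T → R}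
    (hf : Monotone f) {P : T → Prop} (inv1 : ∀ t, P t → Odd (f t))
    (inv2 : Set.InjOn f {t | P t}) {a b : T} (hfb : f b ≤ f a + 1) :
    {t ∈ Set.Icc a b | P t}.Subsingleton := by
  have mem_odd_Icc {t : T} (htab : t ∈ Set.Icc a b) (ht : P t) :
      f t ∈ {k ∈ Set.Icc (f a) (f a + 1) | Odd k} :=
    ⟨Set.Icc_subset_Icc_right hfb (hf.mapsTo_Icc htab), inv1 t ht⟩
  rintro s ⟨hsab, hs⟩ t ⟨htab, ht⟩
  exact inv2 hs ht <| subsingleton_setOf_odd_mem_Icc_add_one (f a)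
    (mem_odd_Icc hsab hs) (mem_odd_Icc htab ht)

end OddInterval

/-- If two reads of the counter differ by at most one, the shared array is
modified at most once in between. -/
theorem at_most_one_modification
    (f : ℕ → ℕ) (hf : Monotone f) (P : ℕ → Prop)
    (inv1 : ∀ t, P t → Odd (f t))
    (inv2 : ∀ s t, P s → P t → f s = f t → s = t)
    (a b : ℕ) (hab : a ≤ b) (hfb : f b ≤ f a + 1) :
    ∀ s t, a ≤ s → s ≤ b → a ≤ t → t ≤ b → P s → P t → s = t := by
  intro s t has hsb hat htb hs ht
  exact at_most_one_modification_general hf inv1 (fun s hs t ht => inv2 s t hs ht) hfb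
    ⟨⟨has, hsb⟩, hs⟩ ⟨⟨hat, htb⟩, ht⟩
end

section
/- Let M : ℕ → ι → α and let f : ℕ → ℕ be monotone. Assume: (i) every change of M is single-entry; (ii) every change time t of M satisfies Odd (f t); (iii) if s and t are change times of M with f s = f t, then s = t. If a ≤ b and f b ≤ f a + 1, then every collect with read times in [a,b] is a snapshot over [a,b]: for every c : ι → ℕ with a ≤ c k ≤ b for all k, there exists t with a ≤ t ≤ b such that M (c k) k = M t k for all k. -/
/-!
Changes happen only at odd values of the counter, at most once per value, and two consecutive values
contain a single odd number; so at most one change occurs in `[a, b)`. That change touches only one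
entry `k₀`, so all other entries are constant on `[a, b]`, and the collect agrees with the array
at the time `c k₀` at which `k₀` was read.
-/

section

open Set

variable {ι α β : Type*}

/-- The times at which `x` changes; a change at time `t` takes place between `t` and `t + 1`. -/
def changeTimes (x : ℕ → β) : Set ℕ := {t | x (t + 1) ≠ x t}

/-- The collect with read times `c` is a snapshot of `M` over `[a, b]`: it is the state of the
whole array at a single time of the interval. -/
def IsSnapshotOver (M : ℕ → ι → α) (c : ι → ℕ) (a b : ℕ) : Prop :=
  ∃ t, a ≤ t ∧ t ≤ b ∧ ∀ k, M (c k) k = M t k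

theorem changeTimes_entry_subset (M : ℕ → ι → α) (k : ι) :
    changeTimes (fun t => M t k) ⊆ changeTimes M :=
  fun _ hk hM => hk (congrFun hM k)

theorem eq_of_disjoint_changeTimes {x : ℕ → β} {a b : ℕ}
    (h : Disjoint (changeTimes x) (Ico a b)) {u v : ℕ} (hu : u ∈ Icc a b) (hv : v ∈ Icc a b) :
    x u = x v := by
  have eq_left : ∀ t, a ≤ t → t ≤ b → x t = x a := by
    intro t hat
    induction t, hat using Nat.le_induction with
    | base => exact fun _ => rfl
    | succ t hat ih =>
      intro htb
      have hstep : x (t + 1) = x t := not_not.mp (disjoint_right.mp h ⟨hat, htb⟩)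
      exact hstep.trans (ih (Nat.le_of_succ_le htb))
  exact (eq_left u hu.1 hu.2).trans (eq_left v hv.1 hv.2).symm

variable {M : ℕ → ι → α} {c : ι → ℕ} {a b : ℕ}

theorem isSnapshotOver_of_disjoint_changeTimes (h : Disjoint (changeTimes M) (Ico a b))
    (hab : a ≤ b) (hc : ∀ k, c k ∈ Icc a b) : IsSnapshotOver M c a b :=
  ⟨a, le_rfl, hab, fun k =>
    congrFun (eq_of_disjoint_changeTimes h (hc k) (left_mem_Icc.mpr hab)) k⟩

theorem isSnapshotOver_of_forall_ne_disjoint_changeTimes {k₀ : ι}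
    (h : ∀ k ≠ k₀, Disjoint (changeTimes fun t => M t k) (Ico a b))
    (hc : ∀ k, c k ∈ Icc a b) : IsSnapshotOver M c a b := by
  refine ⟨c k₀, (hc k₀).1, (hc k₀).2, fun k => ?_⟩
  obtain rfl | hk := eq_or_ne k k₀
  · rfl
  · exact eq_of_disjoint_changeTimes (h k hk) (hc k) (hc k₀)

theorem isSnapshotOver_of_subsingleton_changeTimes
    (hsub : (changeTimes M ∩ Ico a b).Subsingleton)
    (hsingle : ∀ t ∈ changeTimes M ∩ Ico a b, ∃ k₀, ∀ k ≠ k₀, M (t + 1) k = M t k)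
    (hab : a ≤ b) (hc : ∀ k, c k ∈ Icc a b) : IsSnapshotOver M c a b := by
  obtain hempty | ⟨s, hs⟩ := (changeTimes M ∩ Ico a b).eq_empty_or_nonempty
  · exact isSnapshotOver_of_disjoint_changeTimes (disjoint_iff_inter_eq_empty.mpr hempty) hab hc
  · obtain ⟨k₀, hk₀⟩ := hsingle s hs
    refine isSnapshotOver_of_forall_ne_disjoint_changeTimes (k₀ := k₀) (fun k hk => ?_) hc
    refine disjoint_left.mpr fun t hchange ht => hchange ?_
    obtain rfl : t = s := hsub ⟨changeTimes_entry_subset M k hchange, ht⟩ hs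
    exact hk₀ k hk

theorem subsingleton_odd_inter_Icc_add_one (n : ℕ) :
    ({m | Odd m} ∩ Icc n (n + 1)).Subsingleton := by
  rintro _ ⟨⟨i, rfl⟩, hi⟩ _ ⟨⟨j, rfl⟩, hj⟩
  rw [mem_Icc] at hi hj
  omega

theorem subsingleton_inter_Icc_of_injOn_of_odd {τ : Type*} [Preorder τ] {f : τ → ℕ} {S : Set τ}
    {a b : τ} (hf : Monotone f) (hinj : InjOn f S) (hodd : ∀ t ∈ S, Odd (f t))
    (hfb : f b ≤ f a + 1) : (S ∩ Icc a b).Subsingleton := by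
  have hmaps : ∀ t ∈ S ∩ Icc a b, f t ∈ {m | Odd m} ∩ Icc (f a) (f a + 1) :=
    fun t ht => ⟨hodd t ht.1, hf ht.2.1, (hf ht.2.2).trans hfb⟩
  exact fun s hs t ht =>
    hinj hs.1 ht.1 (subsingleton_odd_inter_Icc_add_one (f a) (hmaps s hs) (hmaps t ht))

end

/-- Correctness of the termination test of the solo-updater Scan (line A13):
if two reads of the counter `f` sandwiching a collect differ by at most one,
then the collect is a snapshot. -/
theorem solo_updater_scan_correct
    {ι α : Type*} (M : ℕ → ι → α) (f : ℕ → ℕ) (hf : Monotone f)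
    (hsingle : ∀ t, M (t + 1) ≠ M t → ∃ k₀ : ι, ∀ k, k ≠ k₀ → M (t + 1) k = M t k)
    (hodd : ∀ t, M (t + 1) ≠ M t → Odd (f t))
    (hinj : ∀ s t, M (s + 1) ≠ M s → M (t + 1) ≠ M t → f s = f t → s = t)
    (a b : ℕ) (hab : a ≤ b) (hfb : f b ≤ f a + 1) :
    ∀ c : ι → ℕ, (∀ k, a ≤ c k ∧ c k ≤ b) →
      ∃ t, a ≤ t ∧ t ≤ b ∧ ∀ k, M (c k) k = M t k := by
  intro c hc
  have hunique : (changeTimes M ∩ Set.Icc a b).Subsingleton :=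
    subsingleton_inter_Icc_of_injOn_of_odd hf (fun s hs t ht => hinj s t hs ht) hodd hfb
  exact isSnapshotOver_of_subsingleton_changeTimes
    (hunique.anti (Set.inter_subset_inter_right _ Set.Ico_subset_Icc_self))
    (fun t ht => hsingle t ht.1) hab hc
end

section
/- Let J be a finite set of process indices (a Finset in a type ι'), and for each j let f j : ℕ → ℕ be monotone and P j : ℕ → Prop satisfy the counter invariants (inv1) and (inv2). Let a ≤ b be such that f j b ≤ f j a + 1 for every j ∈ J. Then the number of modification events in [a,b], i.e., the cardinality of the set of pairs {(j,t) : j ∈ J, a ≤ t ≤ b, P j t}, is at most the cardinality of {j ∈ J : ¬(f j a = f j b ∧ Even (f j a))}. -/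
/-!
An interval `[n, n + 1]` contains exactly one odd number, and a counter that grows by at most one
over `[a, b]` takes only values in such an interval there. Since modifications happen at odd,
pairwise distinct counter values, each process has at most one modification in `[a, b]`, and none
if its counter stays constant and even. Hence projecting events to their process is injective and
lands in the set of offending processes.
-/

theorem eq_of_odd_of_mem_Icc_add_one {n k l : ℕ} (hk : Odd k) (hl : Odd l)
    (hkn : k ∈ Set.Icc n (n + 1)) (hln : l ∈ Set.Icc n (n + 1)) : k = l := by
  rw [Nat.odd_iff] at hk hl
  rw [Set.mem_Icc] at hkn hln
  omega

section Counter

variable {τ : Type*} [Preorder τ] {f : τ → ℕ} {a b : τ}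

theorem not_eq_and_even_of_monotone_of_odd {t : τ} (hf : Monotone f) (ht : t ∈ Set.Icc a b)
    (hodd : Odd (f t)) : ¬ (f a = f b ∧ Even (f a)) := by
  rintro ⟨hconst, heven⟩
  have hta : f t = f a := le_antisymm ((hf ht.2).trans hconst.ge) (hf ht.1)
  exact Nat.not_even_iff_odd.mpr hodd (hta ▸ heven)

theorem subsingleton_inter_Icc_of_monotone_of_odd {s : Set τ} (hf : Monotone f)
    (hodd : ∀ t ∈ s, Odd (f t)) (hinj : s.InjOn f) (hstep : f b ≤ f a + 1) :
    (s ∩ Set.Icc a b).Subsingleton := by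
  have hmem : ∀ t ∈ Set.Icc a b, f t ∈ Set.Icc (f a) (f a + 1) := fun t ht ↦
    ⟨hf ht.1, (hf ht.2).trans hstep⟩
  rintro t ⟨hts, ht⟩ u ⟨hus, hu⟩
  exact hinj hts hus
    (eq_of_odd_of_mem_Icc_add_one (hodd t hts) (hodd u hus) (hmem t ht) (hmem u hu))

end Counter

-- Stated with `encard` because `ncard` is `0` on infinite sets.
theorem modification_events_le_general {ι τ : Type*} [Preorder τ] (J : Set ι) (f : ι → τ → ℕ)
    (P : ι → τ → Prop) (hf : ∀ j ∈ J, Monotone (f j))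
    (inv1 : ∀ j ∈ J, ∀ t, P j t → Odd (f j t))
    (inv2 : ∀ j ∈ J, ∀ s t, P j s → P j t → f j s = f j t → s = t)
    (a b : τ) (hbound : ∀ j ∈ J, f j b ≤ f j a + 1) :
    Set.encard {p : ι × τ | p.1 ∈ J ∧ a ≤ p.2 ∧ p.2 ≤ b ∧ P p.1 p.2} ≤
      Set.encard {j : ι | j ∈ J ∧ ¬ (f j a = f j b ∧ Even (f j a))} := by
  refine Set.encard_le_encard_of_injOn (f := Prod.fst) ?mapsTo ?injOn
  case mapsTo =>
    rintro ⟨j, t⟩ ⟨hj, hat, htb, hP⟩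
    exact ⟨hj, not_eq_and_even_of_monotone_of_odd (hf j hj) ⟨hat, htb⟩ (inv1 j hj t hP)⟩
  case injOn =>
    rintro ⟨j, s⟩ ⟨hj, has, hsb, hPs⟩ ⟨_, t⟩ ⟨-, hat, htb, hPt⟩ rfl
    have hinj : Set.InjOn (f j) {t | P j t} := fun s hs t ht ↦ inv2 j hj s t hs ht
    have honce : ({t | P j t} ∩ Set.Icc a b).Subsingleton :=
      subsingleton_inter_Icc_of_monotone_of_odd (hf j hj) (inv1 j hj) hinj (hbound j hj)
    exact Prod.ext rfl (honce ⟨hPs, has, hsb⟩ ⟨hPt, hat, htb⟩)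

/-- Justification of line B14 of the concurrent-updater algorithm: when every
process's counter increases by at most one over `[a,b]`, the number of
modification events in `[a,b]` is bounded by the number of processes whose two
counter reads are not equal-and-even. -/
theorem modification_events_le
    {ι' : Type*} (J : Finset ι') (f : ι' → ℕ → ℕ) (P : ι' → ℕ → Prop)
    (hf : ∀ j ∈ J, Monotone (f j))
    (inv1 : ∀ j ∈ J, ∀ t, P j t → Odd (f j t))
    (inv2 : ∀ j ∈ J, ∀ s t, P j s → P j t → f j s = f j t → s = t)
    (a b : ℕ) (hab : a ≤ b)
    (hbound : ∀ j ∈ J, f j b ≤ f j a + 1) :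
    Set.ncard {p : ι' × ℕ | p.1 ∈ J ∧ a ≤ p.2 ∧ p.2 ≤ b ∧ P p.1 p.2} ≤
      Set.ncard {j : ι' | j ∈ J ∧ ¬ (f j a = f j b ∧ Even (f j a))} :=
  ENat.toNat_le_toNat (modification_events_le_general (J : Set ι') f P hf inv1 inv2 a b hbound)
    (J.finite_toSet.subset fun _ hj ↦ hj.1).encard_lt_top.ne
end

section
/- Let J be a finite set of process indices, and for each j let f j : ℕ → ℕ be monotone and P j : ℕ → Prop satisfy the counter invariants (inv1) and (inv2). Let a ≤ b ≤ c be such that f j b ≤ f j a + 1 and f j c = f j b for every j ∈ J. Then the number of modification events in the extended interval [a,c], i.e., the cardinality of {(j,t) : j ∈ J, a ≤ t ≤ c, P j t}, is at most the cardinality of {j ∈ J : ¬(f j a = f j b ∧ Even (f j a))}. -/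
/-!
While a counter advances by at most one it takes at most one odd value, and none if it rests at an
even value. As a process modifies the array at most once per odd value of its counter, sending each
modification event to its process is an injection into the processes counted by `ℓ`.
-/

theorem subsingleton_odd_mem_Icc_add_one (k : ℕ) :
    {n | n ∈ Set.Icc k (k + 1) ∧ Odd n}.Subsingleton := by
  rintro m ⟨⟨hkm, hmk⟩, hm⟩ n ⟨⟨hkn, hnk⟩, hn⟩
  rw [Nat.odd_iff] at hm hn
  omega

theorem injOn_fst_of_subsingleton_fibers {α β : Type*} {s : Set (α × β)}
    (hs : ∀ x, {y | (x, y) ∈ s}.Subsingleton) : s.InjOn Prod.fst := by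
  rintro ⟨x, y⟩ hy ⟨_, z⟩ hz rfl
  exact congrArg (Prod.mk x) (hs x hy hz)

section SingleCounter

variable {T : Type*} [Preorder T] {f : T → ℕ} {P : T → Prop} {a c : T}

theorem subsingleton_modifications_of_le_add_one (hf : Monotone f)
    (hodd : ∀ t, P t → Odd (f t)) (hinj : Set.InjOn f {t | P t}) (hac : f c ≤ f a + 1) :
    {t | a ≤ t ∧ t ≤ c ∧ P t}.Subsingleton := by
  rintro s ⟨has, hsc, hs⟩ t ⟨hat, htc, ht⟩
  have hfst : f s = f t := subsingleton_odd_mem_Icc_add_one (f a)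
    ⟨⟨hf has, (hf hsc).trans hac⟩, hodd s hs⟩ ⟨⟨hf hat, (hf htc).trans hac⟩, hodd t ht⟩
  exact hinj hs ht hfst

theorem not_modification_of_eq_of_even (hf : Monotone f) (hodd : ∀ t, P t → Odd (f t))
    (hac : f a = f c) (heven : Even (f a)) {t : T} (hat : a ≤ t) (htc : t ≤ c) : ¬ P t := by
  intro ht
  have hfta : f t = f a := le_antisymm ((hf htc).trans_eq hac.symm) (hf hat)
  exact Nat.not_odd_iff_even.mpr heven (hfta ▸ hodd t ht)

end SingleCounter

theorem modification_events_le_extended_general {ι T : Type*} [Preorder T] (J : Set ι)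
    (f : ι → T → ℕ) (P : ι → T → Prop)
    (hf : ∀ j ∈ J, Monotone (f j))
    (hodd : ∀ j ∈ J, ∀ t, P j t → Odd (f j t))
    (hinj : ∀ j ∈ J, Set.InjOn (f j) {t | P j t})
    (a b c : T)
    (hbound : ∀ j ∈ J, f j b ≤ f j a + 1)
    (heq : ∀ j ∈ J, f j c = f j b) :
    Set.encard {p : ι × T | p.1 ∈ J ∧ a ≤ p.2 ∧ p.2 ≤ c ∧ P p.1 p.2} ≤
      Set.encard {j : ι | j ∈ J ∧ ¬ (f j a = f j b ∧ Even (f j a))} := by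
  refine Set.encard_le_encard_of_injOn (f := Prod.fst) ?mapsTo ?injOn
  case mapsTo =>
    rintro ⟨j, t⟩ ⟨hj, hat, htc, ht⟩
    exact ⟨hj, fun ⟨hab, heven⟩ => not_modification_of_eq_of_even (hf j hj) (hodd j hj)
      (hab.trans (heq j hj).symm) heven hat htc ht⟩
  case injOn =>
    refine injOn_fst_of_subsingleton_fibers fun j s ⟨hj, hs⟩ t ⟨_, ht⟩ => ?_
    have hac : f j c ≤ f j a + 1 := (heq j hj).trans_le (hbound j hj)
    exact subsingleton_modifications_of_le_add_one (hf j hj) (hodd j hj) (hinj j hj) hac hs ht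

/-- Justification of lines B19–B20 of the concurrent-updater algorithm: since
the second and third collects of the counters are equal (`f j c = f j b`), the
bound `ℓ` still upper-bounds the number of modification events over the
extended interval `[a,c]`. -/
theorem modification_events_le_extended
    {ι' : Type*} (J : Finset ι') (f : ι' → ℕ → ℕ) (P : ι' → ℕ → Prop)
    (hf : ∀ j ∈ J, Monotone (f j))
    (inv1 : ∀ j ∈ J, ∀ t, P j t → Odd (f j t))
    (inv2 : ∀ j ∈ J, ∀ s t, P j s → P j t → f j s = f j t → s = t)
    (a b c : ℕ) (hab : a ≤ b) (hbc : b ≤ c)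
    (hbound : ∀ j ∈ J, f j b ≤ f j a + 1)
    (heq : ∀ j ∈ J, f j c = f j b) :
    Set.ncard {p : ι' × ℕ | p.1 ∈ J ∧ a ≤ p.2 ∧ p.2 ≤ c ∧ P p.1 p.2} ≤
      Set.ncard {j : ι' | j ∈ J ∧ ¬ (f j a = f j b ∧ Even (f j a))} :=
  ENat.toNat_le_toNat
    (modification_events_le_extended_general (J : Set ι') f P hf inv1
      (fun j hj s hs t ht => inv2 j hj s t hs ht) a b c hbound heq)
    (J.finite_toSet.subset fun _ hj => hj.1).encard_lt_top.ne
end
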